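/- Let ρ : ℝ^d → ℝ be a nonnegative bounded measurable function and v : ℝ^d → ℝ^d a bounded measurable vector field, let x ∈ ℝ^d, ℓ > 0 and M > 0, and suppose ρ̄_ℓ(x) ≥ 1/M. Then the Favre-averaged velocity gradient satisfies |∇ṽ_ℓ(x)| ≤ (C/ℓ) · δv(ℓ;x) · [1 + M·δρ(ℓ;x) + M²·(δρ(ℓ;x))²], where C is a constant depending only on G and d, and |·| of a matrix is the Frobenius norm. -/

import Mathlib

/-!
The Favre velocity is the quotient of the averages of `ρ v` and of `ρ`, and subtracting the constant
`v(x)` from `v` changes it only by a constant (`favre_apply_eq`). Hence each entry of the gradient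
at `x` is given by the quotient rule

  `∂_i ṽ_j = ∂_i m / ρ̄ - m ∂_i ρ̄ / ρ̄²`, where `m` is the average of `ρ (v_j - v_j(x))`.

A derivative of an average falls on the kernel (`hasFDerivAt_cg`); the differentiated kernel has
`L¹` norm at most `‖∇G‖₁ / ℓ` (`integral_abs_dker_le`) and mean zero (`integral_dker`). On the
averaging ball `|v_j - v_j(x)| ≤ δv` and `ρ ≤ ρ̄(x) + 2 δρ`, so that

  `|∂_i m| ≤ (‖∇G‖₁ / ℓ) (ρ̄ + 2 δρ) δv`,  `|m| ≤ ρ̄ δv`,  `|∂_i ρ̄| ≤ (‖∇G‖₁ / ℓ) δρ`,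

the last bound because the mean-zero kernel sees only the increments of `ρ`. With `1 / ρ̄ ≤ M` this
gives `|∂_i ṽ_j| ≤ (‖∇G‖₁ / ℓ) δv (1 + 3 M δρ)` (`abs_fderiv_weighted_le`, `abs_pd_favre_le`),
which is linear in `M δρ` and so stronger than the quadratic bound claimed. Passing to the
Frobenius norm costs a factor `d`.
-/

open MeasureTheory Metric
open scoped RealInnerProductSpace ENNReal

noncomputable section

abbrev Euc (d : ℕ) := EuclideanSpace ℝ (Fin d)

namespace QT

variable {d : ℕ}

/-- `G` is a mollifier: smooth, nonnegative, supported in the open unit ball, integral one. -/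
structure IsMollifier {d : ℕ} (G : Euc d → ℝ) : Prop where
  smooth : ContDiff ℝ (⊤ : ℕ∞) G
  nonneg : ∀ r, 0 ≤ G r
  supp : tsupport G ⊆ ball (0 : Euc d) 1
  integral_one : ∫ r, G r = 1

/-- The rescaled mollifier `G_ℓ(r) = ℓ^{-d} G(r/ℓ)`. -/
def resc (G : Euc d → ℝ) (ℓ : ℝ) (r : Euc d) : ℝ := (ℓ ^ d)⁻¹ * G (ℓ⁻¹ • r)

/-- Coarse-grained field `ā_ℓ(x) = ∫ G_ℓ(r) a(x+r) dr`. -/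
def cg {E : Type*} [NormedAddCommGroup E] [NormedSpace ℝ E]
    (G : Euc d → ℝ) (ℓ : ℝ) (a : Euc d → E) (x : Euc d) : E :=
  ∫ r, resc G ℓ r • a (x + r)

/-- Increment `δa(r;x) = a(x+r) - a(x)`. -/
def incr {E : Type*} [NormedAddCommGroup E] (a : Euc d → E) (r x : Euc d) : E :=
  a (x + r) - a x

/-- `δa(ℓ;x) = sup_{|r|<ℓ} |δa(r;x)|`. -/
def supIncr {E : Type*} [NormedAddCommGroup E] (a : Euc d → E) (ℓ : ℝ) (x : Euc d) : ℝ :=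
  ⨆ r ∈ ball (0 : Euc d) ℓ, ‖incr a r x‖

/-- Second-order coarse-graining cumulant `τ̄_ℓ(f,g)`. -/
def tau2 (G : Euc d → ℝ) (ℓ : ℝ) (f g : Euc d → ℝ) (x : Euc d) : ℝ :=
  cg G ℓ (fun y => f y * g y) x - cg G ℓ f x * cg G ℓ g x

/-- `τ̄_ℓ(ρ, v)` for a scalar density and a vector field. -/
def tauV (G : Euc d → ℝ) (ℓ : ℝ) (ρ : Euc d → ℝ) (v : Euc d → Euc d) (x : Euc d) : Euc d :=
  cg G ℓ (fun y => ρ y • v y) x - cg G ℓ ρ x • cg G ℓ v x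

/-- `i`-th standard basis vector. -/
def e (d : ℕ) (i : Fin d) : Euc d := EuclideanSpace.single i (1 : ℝ)

/-- Partial derivative `∂_i f(x)`. -/
def pd (i : Fin d) (f : Euc d → ℝ) (x : Euc d) : ℝ := fderiv ℝ f x (e d i)

/-- Laplacian. -/
def lap (f : Euc d → ℝ) (x : Euc d) : ℝ := ∑ i, pd i (fun y => pd i f y) x

/-- Gradient matrix `(∇v)_{ij} = ∂_i v_j`. -/
def gradMat (v : Euc d → Euc d) (x : Euc d) : Matrix (Fin d) (Fin d) ℝ :=
  Matrix.of fun i j => pd i (fun y => v y j) x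

/-- Frobenius norm of a matrix. -/
def frobNorm (A : Matrix (Fin d) (Fin d) ℝ) : ℝ := Real.sqrt (∑ i, ∑ j, A i j ^ 2)

/-- Frobenius inner product `A : B`. -/
def frobInner (A B : Matrix (Fin d) (Fin d) ℝ) : ℝ := ∑ i, ∑ j, A i j * B i j

/-- Favre-averaged velocity `ṽ_ℓ = \overline{(ρv)}_ℓ/ρ̄_ℓ` where `ρ̄_ℓ > 0`, `0` otherwise. -/
def favre (G : Euc d → ℝ) (ℓ : ℝ) (ρ : Euc d → ℝ) (v : Euc d → Euc d) (x : Euc d) : Euc d :=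
  if 0 < cg G ℓ ρ x then (cg G ℓ ρ x)⁻¹ • cg G ℓ (fun y => ρ y • v y) x else 0

/-- Favre stress `τ̃_ℓ(v,v) = \overline{(ρ v⊗v)}_ℓ/ρ̄_ℓ − ṽ_ℓ ⊗ ṽ_ℓ`. -/
def favreStress (G : Euc d → ℝ) (ℓ : ℝ) (ρ : Euc d → ℝ) (v : Euc d → Euc d) (x : Euc d) :
    Matrix (Fin d) (Fin d) ℝ :=
  Matrix.of fun i j =>
    (cg G ℓ ρ x)⁻¹ * cg G ℓ (fun y => ρ y * (v y i * v y j)) x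
      - favre G ℓ ρ v x i * favre G ℓ ρ v x j

/-- Deformation work `Π_ℓ = −ρ̄_ℓ ∇ṽ_ℓ : τ̃_ℓ(v,v)`. -/
def deformWork (G : Euc d → ℝ) (ℓ : ℝ) (ρ : Euc d → ℝ) (v : Euc d → Euc d) (x : Euc d) : ℝ :=
  -(cg G ℓ ρ x * frobInner (gradMat (favre G ℓ ρ v) x) (favreStress G ℓ ρ v x))

/-- The periodic box `[0,𝓛]^d`. -/
def box (d : ℕ) (L : ℝ) : Set (Euc d) := {x | ∀ i, x i ∈ Set.Icc (0 : ℝ) L}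

/-- Normalized measure on the periodic box, so that `eLpNorm · p (boxMeasure d 𝓛)`
is the normalized `L^p` norm `(𝓛^{-d}∫_{[0,𝓛]^d}|f|^p)^{1/p}` (ess-sup for `p = ∞`). -/
def boxMeasure (d : ℕ) (L : ℝ) : Measure (Euc d) :=
  (ENNReal.ofReal (L ^ d))⁻¹ • (volume.restrict (box d L))

/-- `𝓛`-periodicity in each coordinate. -/
def PeriodicF {E : Type*} (L : ℝ) (f : Euc d → E) : Prop :=
  ∀ (x : Euc d) (i : Fin d), f (x + EuclideanSpace.single i L) = f x

/-- Quantum stress `Σ = (ħ²/4m²)(Δρ)I − (ħ²/m²)∇√ρ ⊗ ∇√ρ`. -/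
def qStress (hb m : ℝ) (ρ : Euc d → ℝ) (x : Euc d) : Matrix (Fin d) (Fin d) ℝ :=
  Matrix.of fun i j =>
    (hb ^ 2 / (4 * m ^ 2)) * lap ρ x * (if i = j then (1 : ℝ) else 0)
      - (hb ^ 2 / m ^ 2) * (gradient (fun y => Real.sqrt (ρ y)) x i
          * gradient (fun y => Real.sqrt (ρ y)) x j)

/-- Coarse-grained quantum stress `Σ̄_ℓ`. -/
def cgStress (G : Euc d → ℝ) (ℓ hb m : ℝ) (ρ : Euc d → ℝ) (x : Euc d) :
    Matrix (Fin d) (Fin d) ℝ :=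
  Matrix.of fun i j => cg G ℓ (fun z => qStress hb m ρ z i j) x

/-- Row-wise divergence of the coarse-grained quantum stress, `(∇·Σ̄_ℓ)_j = ∑_i ∂_i (Σ̄_ℓ)_{ij}`. -/
def divCgStress (G : Euc d → ℝ) (ℓ hb m : ℝ) (ρ : Euc d → ℝ) (x : Euc d) : Euc d :=
  (EuclideanSpace.equiv (Fin d) ℝ).symm
    (fun j => ∑ i, pd i (fun y => cgStress G ℓ hb m ρ y i j) x)

/-- Quantum baropycnal work `Λ^{(Σ)}_ℓ = −(1/ρ̄_ℓ)(∇·Σ̄_ℓ)·τ̄_ℓ(ρ,v)`. -/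
def qBaroWork (G : Euc d → ℝ) (ℓ hb m : ℝ) (ρ : Euc d → ℝ) (v : Euc d → Euc d) (x : Euc d) : ℝ :=
  -((cg G ℓ ρ x)⁻¹ * ⟪divCgStress G ℓ hb m ρ x, tauV G ℓ ρ v x⟫)

end QT

namespace QT

/-! ### The rescaled kernel and its derivative -/

section Kernel

variable {G : Euc d → ℝ} {ℓ : ℝ}

lemma resc_contDiff (hG : IsMollifier G) : ContDiff ℝ 1 (resc G ℓ) := by
  have h : ContDiff ℝ 1 G := hG.smooth.of_le (by norm_cast)
  unfold resc
  fun_prop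

lemma IsMollifier.hasCompactSupport (hG : IsMollifier G) : HasCompactSupport G :=
  HasCompactSupport.of_support_subset_isCompact (isCompact_closedBall (0 : Euc d) 1)
    ((subset_tsupport G).trans (hG.supp.trans ball_subset_closedBall))

lemma resc_hasCompactSupport (hG : IsMollifier G) (hℓ : 0 < ℓ) :
    HasCompactSupport (resc G ℓ) :=
  (hG.hasCompactSupport.comp_smul (inv_ne_zero hℓ.ne')).mul_left

lemma resc_nonneg (hG : IsMollifier G) (hℓ : 0 < ℓ) (r : Euc d) : 0 ≤ resc G ℓ r :=
  mul_nonneg (by positivity) (hG.nonneg _)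

lemma inv_smul_notMem_tsupport (hG : IsMollifier G) (hℓ : 0 < ℓ) {r : Euc d}
    (hr : r ∉ ball (0 : Euc d) ℓ) : ℓ⁻¹ • r ∉ tsupport G := by
  intro h
  have h1 := hG.supp h
  rw [mem_ball_zero_iff, norm_smul, norm_inv, Real.norm_of_nonneg hℓ.le, inv_mul_lt_iff₀ hℓ,
    mul_one] at h1
  exact hr (mem_ball_zero_iff.2 h1)

lemma resc_eq_zero (hG : IsMollifier G) (hℓ : 0 < ℓ) {r : Euc d}
    (hr : r ∉ ball (0 : Euc d) ℓ) : resc G ℓ r = 0 := by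
  rw [resc, image_eq_zero_of_notMem_tsupport (inv_smul_notMem_tsupport hG hℓ hr), mul_zero]

lemma resc_integrable (hG : IsMollifier G) (hℓ : 0 < ℓ) : Integrable (resc G ℓ) :=
  (resc_contDiff hG).continuous.integrable_of_hasCompactSupport (resc_hasCompactSupport hG hℓ)

lemma integral_resc (hG : IsMollifier G) (hℓ : 0 < ℓ) : ∫ r, resc G ℓ r = 1 := by
  unfold resc
  rw [integral_const_mul, Measure.integral_comp_inv_smul_of_nonneg _ _ hℓ.le, hG.integral_one]
  simp [hℓ.ne']

lemma fderiv_resc (hG : IsMollifier G) (r : Euc d) :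
    fderiv ℝ (resc G ℓ) r = ((ℓ ^ d)⁻¹ * ℓ⁻¹) • fderiv ℝ G (ℓ⁻¹ • r) := by
  have h : DifferentiableAt ℝ G (ℓ⁻¹ • r) :=
    (hG.smooth.differentiable (by simp)).differentiableAt
  have h2 : HasFDerivAt (fun s : Euc d => ℓ⁻¹ • s) (ℓ⁻¹ • ContinuousLinearMap.id ℝ (Euc d)) r :=
    (hasFDerivAt_id r).const_smul ℓ⁻¹
  have h3 := (h.hasFDerivAt.comp r h2).const_mul (ℓ ^ d)⁻¹
  refine h3.fderiv.trans ?_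
  ext w
  simp [mul_assoc]

/-- The kernel `-∂_w G_ℓ`: by `hasFDerivAt_cg`, integrating it against `f (x + ·)` gives the
derivative of the coarse-grained field `f̄_ℓ` at `x` in the direction `w`. -/
def dker (G : Euc d → ℝ) (ℓ : ℝ) (w r : Euc d) : ℝ := -(fderiv ℝ (resc G ℓ) r w)

lemma dker_eq_zero (hG : IsMollifier G) (hℓ : 0 < ℓ) (w : Euc d) {r : Euc d}
    (hr : r ∉ ball (0 : Euc d) ℓ) : dker G ℓ w r = 0 := by
  rw [dker, fderiv_resc hG, fderiv_of_notMem_tsupport _ (inv_smul_notMem_tsupport hG hℓ hr)]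
  simp

lemma dker_integrable (hG : IsMollifier G) (hℓ : 0 < ℓ) (w : Euc d) :
    Integrable (dker G ℓ w) := by
  have hc : Continuous fun r => fderiv ℝ (resc G ℓ) r w :=
    ((resc_contDiff hG).continuous_fderiv (by simp)).clm_apply continuous_const
  exact (hc.integrable_of_hasCompactSupport
    ((resc_hasCompactSupport hG hℓ).fderiv_apply (𝕜 := ℝ) w)).neg

/-- Scaling: the kernel of the derivative has `L¹` norm of order `ℓ⁻¹`. -/
lemma integral_abs_dker_le (hG : IsMollifier G) (hℓ : 0 < ℓ) {w : Euc d} (hw : ‖w‖ = 1) :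
    ∫ r, |dker G ℓ w r| ≤ (∫ r, ‖fderiv ℝ G r‖) / ℓ := by
  have hc : Continuous fun r => ‖fderiv ℝ G r‖ :=
    (hG.smooth.continuous_fderiv (by simp)).norm
  have hint : Integrable fun r => ‖fderiv ℝ G r‖ :=
    hc.integrable_of_hasCompactSupport (hG.hasCompactSupport.fderiv (𝕜 := ℝ)).norm
  have hint' : Integrable fun r : Euc d => ‖fderiv ℝ G (ℓ⁻¹ • r)‖ :=
    hint.comp_smul (inv_ne_zero hℓ.ne')
  calc ∫ r, |dker G ℓ w r|
      ≤ ∫ r : Euc d, ((ℓ ^ d)⁻¹ * ℓ⁻¹) * ‖fderiv ℝ G (ℓ⁻¹ • r)‖ := by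
        refine integral_mono (dker_integrable hG hℓ w).abs (hint'.const_mul _) fun r => ?_
        have h1 := (fderiv ℝ G (ℓ⁻¹ • r)).le_opNorm w
        rw [hw, mul_one, Real.norm_eq_abs] at h1
        have h2 : 0 ≤ (ℓ ^ d)⁻¹ * ℓ⁻¹ := by positivity
        simp only [dker, fderiv_resc hG, smul_apply, smul_eq_mul, abs_neg]
        rw [abs_mul, abs_of_nonneg h2]
        exact mul_le_mul_of_nonneg_left h1 h2
    _ = (∫ r, ‖fderiv ℝ G r‖) / ℓ := by
        rw [integral_const_mul,
          Measure.integral_comp_inv_smul_of_nonneg _ (fun r => ‖fderiv ℝ G r‖) hℓ.le]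
        simp only [finrank_euclideanSpace, Fintype.card_fin, smul_eq_mul]
        field_simp

/-! ### Differentiating and bounding averages -/

/-- The derivative of a coarse-grained field falls on the kernel. -/
lemma hasFDerivAt_cg (hG : IsMollifier G) (hℓ : 0 < ℓ) {f : Euc d → ℝ} (hf : Measurable f)
    {B : ℝ} (hB : ∀ y, |f y| ≤ B) (x : Euc d) :
    ∃ F : Euc d →L[ℝ] ℝ, HasFDerivAt (cg G ℓ f) F x ∧
      ∀ w, F w = ∫ r, dker G ℓ w r * f (x + r) := by
  have hloc : LocallyIntegrable f volume := by
    refine (locallyIntegrable_const B).mono hf.aestronglyMeasurable (.of_forall fun y => ?_)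
    exact (hB y).trans (le_abs_self B)
  -- The coarse-graining is the convolution with the reflected kernel.
  set K : Euc d → ℝ := fun t => resc G ℓ (-t) with hK
  have hKc : HasCompactSupport K :=
    (resc_hasCompactSupport hG hℓ).comp_homeomorph (Homeomorph.neg (Euc d))
  have hKd : ContDiff ℝ 1 K := (resc_contDiff hG).comp contDiff_neg
  have key := hKc.hasFDerivAt_convolution_left (ContinuousLinearMap.lsmul ℝ ℝ) hKd hloc x
  have hcg : cg G ℓ f = convolution K f (ContinuousLinearMap.lsmul ℝ ℝ) volume := by
    funext y
    rw [convolution_def, cg, ← integral_neg_eq_self]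
    simp [hK, sub_eq_add_neg]
  rw [← hcg] at key
  refine ⟨_, key, fun w => ?_⟩
  have hex : ConvolutionExistsAt (fderiv ℝ K) f x
      ((ContinuousLinearMap.lsmul ℝ ℝ).precompL (Euc d)) volume :=
    (hKc.fderiv (𝕜 := ℝ)).convolutionExists_left _ (hKd.continuous_fderiv (by simp)) hloc x
  rw [convolution_def, ContinuousLinearMap.integral_apply hex, ← integral_neg_eq_self]
  refine integral_congr_ae (.of_forall fun r => ?_)
  have hKf : fderiv ℝ K (-r) w = dker G ℓ w r := by
    have h := fderiv_comp_smul (𝕜 := ℝ) (f := resc G ℓ) (x := -r) (-1)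
    simp only [neg_smul, one_smul, neg_neg] at h
    simp only [hK, h, dker, neg_apply]
  simp [ContinuousLinearMap.precompL_apply, hKf]

lemma kernel_integrable {k : Euc d → ℝ} (hk : Integrable k) {f : Euc d → ℝ} (hf : Measurable f)
    {B : ℝ} (hB : ∀ y, |f y| ≤ B) (x : Euc d) : Integrable fun r => k r * f (x + r) :=
  hk.mul_bdd (c := B) (hf.comp (measurable_const_add x)).aestronglyMeasurable
    (.of_forall fun r => hB (x + r))

lemma abs_integral_kernel_le {k : Euc d → ℝ} (hk : Integrable k)
    (hk0 : ∀ r ∉ ball (0 : Euc d) ℓ, k r = 0) {f : Euc d → ℝ} {x : Euc d} {B : ℝ}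
    (hB : ∀ r ∈ ball (0 : Euc d) ℓ, |f (x + r)| ≤ B) :
    |∫ r, k r * f (x + r)| ≤ (∫ r, |k r|) * B := by
  rw [← integral_mul_const, ← Real.norm_eq_abs]
  refine norm_integral_le_of_norm_le (hk.abs.mul_const B) (.of_forall fun r => ?_)
  rw [Real.norm_eq_abs, abs_mul]
  by_cases hr : r ∈ ball (0 : Euc d) ℓ
  · exact mul_le_mul_of_nonneg_left (hB r hr) (abs_nonneg _)
  · simp [hk0 r hr]

/-- Coarse-graining leaves constants unchanged, so the differentiated kernel has mean zero. -/
lemma integral_dker (hG : IsMollifier G) (hℓ : 0 < ℓ) (w : Euc d) : ∫ r, dker G ℓ w r = 0 := by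
  obtain ⟨F, hF, hFw⟩ := hasFDerivAt_cg hG hℓ (f := fun _ => 1) measurable_const (B := 1)
    (by simp) 0
  have h1 : cg G ℓ (fun _ : Euc d => (1 : ℝ)) = fun _ => 1 := by
    funext y
    simp [cg, integral_resc hG hℓ]
  rw [h1] at hF
  have h2 := hFw w
  rw [hF.unique (hasFDerivAt_const 1 0)] at h2
  simpa using h2.symm

end Kernel

/-! ### Increments -/

lemma norm_incr_le_supIncr {E : Type*} [NormedAddCommGroup E] {a : Euc d → E} {B : ℝ}
    (hB : ∀ y, ‖a y‖ ≤ B) {ℓ : ℝ} (x : Euc d) {r : Euc d} (hr : r ∈ ball (0 : Euc d) ℓ) :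
    ‖incr a r x‖ ≤ supIncr a ℓ x := by
  have hb : ∀ s, ‖incr a s x‖ ≤ B + B := fun s =>
    (norm_sub_le _ _).trans (add_le_add (hB _) (hB _))
  have hB0 : 0 ≤ B + B := (norm_nonneg _).trans (hb 0)
  refine le_ciSup_of_le ⟨B + B, ?_⟩ r ?_
  · rintro _ ⟨s, rfl⟩
    exact Real.iSup_le (fun _ => hb s) hB0
  · simp [hr]

lemma supIncr_nonneg {E : Type*} [NormedAddCommGroup E] (a : Euc d → E) (ℓ : ℝ) (x : Euc d) :
    0 ≤ supIncr a ℓ x :=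
  Real.iSup_nonneg fun _ => Real.iSup_nonneg fun _ => norm_nonneg _

/-! ### The gradient of the Favre average -/

/-- Pointwise quotient-rule estimate for a density-weighted average of a scalar `u` which is of
size `V` on the averaging ball. The derivative of `ρ̄_ℓ` sees only the increments of `ρ`, because
the differentiated kernel has mean zero; and on the ball `ρ ≤ ρ̄_ℓ(x) + 2 δρ(ℓ;x)`. -/
lemma abs_fderiv_weighted_le {G : Euc d → ℝ} (hG : IsMollifier G) {ℓ : ℝ} (hℓ : 0 < ℓ)
    {ρ u : Euc d → ℝ} {R U V M : ℝ} (hρm : Measurable ρ) (hρ0 : ∀ y, 0 ≤ ρ y)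
    (hρR : ∀ y, ρ y ≤ R) (hum : Measurable u) (huU : ∀ y, |u y| ≤ U) {x : Euc d}
    (hV : ∀ r ∈ ball (0 : Euc d) ℓ, |u (x + r)| ≤ V) (hM : 0 < M) (hx : 1 / M ≤ cg G ℓ ρ x)
    {w : Euc d} (hw : ‖w‖ = 1) :
    ∃ F : Euc d →L[ℝ] ℝ,
      HasFDerivAt (fun y => (cg G ℓ ρ y)⁻¹ * cg G ℓ (fun z => ρ z * u z) y) F x ∧
      |F w| ≤ (∫ r, ‖fderiv ℝ G r‖) / ℓ * V * (1 + 3 * (M * supIncr ρ ℓ x)) := by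
  have hρabs : ∀ y, |ρ y| ≤ R := fun y => by rw [abs_of_nonneg (hρ0 y)]; exact hρR y
  have hR0 : 0 ≤ R := (hρ0 x).trans (hρR x)
  have hV0 : 0 ≤ V := (abs_nonneg _).trans (hV 0 (mem_ball_self hℓ))
  have hm : Measurable fun z => ρ z * u z := hρm.mul hum
  have hmb : ∀ y, |ρ y * u y| ≤ R * U := fun y => by
    rw [abs_mul]
    exact mul_le_mul (hρabs y) (huU y) (abs_nonneg _) hR0
  obtain ⟨F₁, hF₁, hF₁w⟩ := hasFDerivAt_cg hG hℓ hρm hρabs x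
  obtain ⟨F₂, hF₂, hF₂w⟩ := hasFDerivAt_cg hG hℓ hm hmb x
  set a := cg G ℓ ρ x with ha
  set m := cg G ℓ (fun z => ρ z * u z) x with hmdef
  set D := supIncr ρ ℓ x with hD
  set c := (∫ r, ‖fderiv ℝ G r‖) / ℓ with hc
  have hc0 : 0 ≤ c := by positivity
  have hD0 : 0 ≤ D := supIncr_nonneg _ _ _
  have ha0 : 0 < a := lt_of_lt_of_le (by positivity) hx
  have hker : ∫ r, |dker G ℓ w r| ≤ c := integral_abs_dker_le hG hℓ hw
  have hinc : ∀ r ∈ ball (0 : Euc d) ℓ, |ρ (x + r) - ρ x| ≤ D := fun r hr =>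
    norm_incr_le_supIncr (a := ρ) hρabs x hr
  have hinta : Integrable fun r => resc G ℓ r * ρ (x + r) :=
    kernel_integrable (resc_integrable hG hℓ) hρm hρabs x
  -- `ρ(x) ≤ ρ̄_ℓ(x) + δρ(ℓ;x)`
  have hρx : ρ x ≤ a + D := by
    have h1 : a - ρ x = ∫ r, resc G ℓ r * (fun z => ρ z - ρ x) (x + r) := by
      have h2 : ρ x = ∫ r, resc G ℓ r * ρ x := by
        rw [integral_mul_const, integral_resc hG hℓ, one_mul]
      conv_lhs => rw [h2]
      simp only [mul_sub]
      rw [integral_sub hinta ((resc_integrable hG hℓ).mul_const _)]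
      rfl
    have h3 := abs_integral_kernel_le (f := fun z => ρ z - ρ x) (x := x)
      (resc_integrable hG hℓ) (fun r hr => resc_eq_zero hG hℓ hr) hinc
    rw [← h1] at h3
    simp only [abs_of_nonneg (resc_nonneg hG hℓ _), integral_resc hG hℓ, one_mul] at h3
    linarith [(abs_le.1 h3).1]
  have hρball : ∀ r ∈ ball (0 : Euc d) ℓ, |ρ (x + r)| ≤ a + 2 * D := fun r hr => by
    rw [abs_of_nonneg (hρ0 _)]
    linarith [(abs_le.1 (hinc r hr)).2]
  have hB₂ : |F₂ w| ≤ c * ((a + 2 * D) * V) := by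
    rw [hF₂w]
    refine (abs_integral_kernel_le (f := fun z => ρ z * u z) (B := (a + 2 * D) * V)
      (dker_integrable hG hℓ w) (fun r hr => dker_eq_zero hG hℓ w hr) fun r hr => ?_).trans
      (mul_le_mul_of_nonneg_right hker (by positivity))
    rw [abs_mul]
    exact mul_le_mul (hρball r hr) (hV r hr) (abs_nonneg _) (by positivity)
  have hB₁ : |F₁ w| ≤ c * D := by
    have h1 : F₁ w = ∫ r, dker G ℓ w r * (fun z => ρ z - ρ x) (x + r) := by
      simp only [mul_sub]
      rw [integral_sub (kernel_integrable (dker_integrable hG hℓ w) hρm hρabs x)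
        ((dker_integrable hG hℓ w).mul_const _), integral_mul_const, integral_dker hG hℓ w,
        hF₁w, zero_mul, sub_zero]
    rw [h1]
    exact (abs_integral_kernel_le (f := fun z => ρ z - ρ x) (dker_integrable hG hℓ w)
      (fun r hr => dker_eq_zero hG hℓ w hr) hinc).trans (mul_le_mul_of_nonneg_right hker hD0)
  -- For `m` the weight `G_ℓ ρ(x + ·)`, of total mass `ρ̄_ℓ(x)`, is used as the kernel.
  have hBm : |m| ≤ a * V := by
    have h1 := abs_integral_kernel_le (f := u) (x := x) (ℓ := ℓ) hinta
      (fun r hr => by rw [resc_eq_zero hG hℓ hr, zero_mul]) hV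
    simp only [abs_of_nonneg (mul_nonneg (resc_nonneg hG hℓ _) (hρ0 _))] at h1
    have h2 : m = ∫ r, resc G ℓ r * ρ (x + r) * u (x + r) := by
      simp only [mul_assoc]
      rfl
    rw [h2]
    exact h1
  refine ⟨_, ((hasDerivAt_inv ha0.ne').comp_hasFDerivAt x hF₁).mul hF₂, ?_⟩
  have haM : a⁻¹ ≤ M := by
    rw [inv_le_comm₀ ha0 hM, ← one_div]; exact hx
  have hai : 0 < a⁻¹ := inv_pos.2 ha0
  simp only [add_apply, smul_apply, smul_eq_mul,
    Function.comp_apply]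
  rw [← ha, ← hmdef]
  calc |a⁻¹ * F₂ w + m * (-(a ^ 2)⁻¹ * F₁ w)|
      ≤ a⁻¹ * |F₂ w| + a⁻¹ * (a⁻¹ * |m|) * |F₁ w| := by
        refine (abs_add_le _ _).trans (le_of_eq ?_)
        rw [abs_mul, abs_mul, abs_mul, abs_neg, abs_of_pos hai,
          abs_of_pos (by positivity : 0 < (a ^ 2)⁻¹)]
        ring
    _ ≤ a⁻¹ * (c * ((a + 2 * D) * V)) + a⁻¹ * (a⁻¹ * (a * V)) * (c * D) := by gcongr
    _ = c * V * (1 + 3 * (a⁻¹ * D)) := by field_simp; ring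
    _ ≤ c * V * (1 + 3 * (M * D)) := by gcongr

/-- A coordinate of the Favre average, after subtracting a constant `b` from the velocity. -/
lemma favre_apply_eq {G : Euc d → ℝ} (hG : IsMollifier G) {ℓ : ℝ} (hℓ : 0 < ℓ)
    {ρ : Euc d → ℝ} {v : Euc d → Euc d} {R Cv : ℝ} (hρm : Measurable ρ)
    (hρR : ∀ y, |ρ y| ≤ R) (hvm : Measurable v) (hv : ∀ y, ‖v y‖ ≤ Cv) (b : ℝ) (j : Fin d)
    {y : Euc d} (hy : 0 < cg G ℓ ρ y) :
    favre G ℓ ρ v y j = b + (cg G ℓ ρ y)⁻¹ * cg G ℓ (fun z => ρ z * (v z j - b)) y := by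
  have hR0 : 0 ≤ R := (abs_nonneg _).trans (hρR y)
  have hvj : Measurable fun z => v z j := by fun_prop
  have hvb : ∀ z, |v z j| ≤ Cv := fun z => (PiLp.norm_apply_le (v z) j).trans (hv z)
  have hint : Integrable fun r => resc G ℓ r • (ρ (y + r) • v (y + r)) := by
    refine (resc_integrable hG hℓ).smul_bdd (R * Cv)
      ((hρm.smul hvm).comp (measurable_const_add y)).aestronglyMeasurable
      (.of_forall fun r => ?_)
    rw [norm_smul]
    exact mul_le_mul (hρR _) (hv _) (norm_nonneg _) hR0
  have h1 : (cg G ℓ (fun z => ρ z • v z) y) j = cg G ℓ (fun z => ρ z * v z j) y :=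
    ((EuclideanSpace.proj (𝕜 := ℝ) j).integral_comp_comm hint).symm
  have h2 : cg G ℓ (fun z => ρ z * (v z j - b)) y
      = cg G ℓ (fun z => ρ z * v z j) y - cg G ℓ ρ y * b := by
    simp only [cg, smul_eq_mul, mul_sub, ← mul_assoc]
    have e1 := kernel_integrable
      (kernel_integrable (resc_integrable hG hℓ) hρm hρR y) hvj hvb y
    rw [integral_sub e1
      ((kernel_integrable (resc_integrable hG hℓ) hρm hρR y).mul_const b), integral_mul_const]
  rw [favre, if_pos hy, h2, ← h1, PiLp.smul_apply, smul_eq_mul]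
  field_simp
  ring

/-- Entrywise version of the estimate. -/
lemma abs_pd_favre_le {G : Euc d → ℝ} (hG : IsMollifier G) {ℓ : ℝ} (hℓ : 0 < ℓ)
    {ρ : Euc d → ℝ} {v : Euc d → Euc d} {R Cv M : ℝ} (hρm : Measurable ρ) (hρ0 : ∀ y, 0 ≤ ρ y)
    (hρR : ∀ y, ρ y ≤ R) (hvm : Measurable v) (hv : ∀ y, ‖v y‖ ≤ Cv) {x : Euc d}
    (hM : 0 < M) (hx : 1 / M ≤ cg G ℓ ρ x) (i j : Fin d) :
    |pd i (fun y => favre G ℓ ρ v y j) x| ≤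
      (∫ r, ‖fderiv ℝ G r‖) / ℓ * supIncr v ℓ x * (1 + 3 * (M * supIncr ρ ℓ x)) := by
  have hρabs : ∀ y, |ρ y| ≤ R := fun y => by rw [abs_of_nonneg (hρ0 y)]; exact hρR y
  have hvb : ∀ z, |v z j| ≤ Cv := fun z => (PiLp.norm_apply_le (v z) j).trans (hv z)
  have hV : ∀ r ∈ ball (0 : Euc d) ℓ, |v (x + r) j - v x j| ≤ supIncr v ℓ x := fun r hr =>
    (PiLp.norm_apply_le (v (x + r) - v x) j).trans (norm_incr_le_supIncr hv x hr)
  obtain ⟨F, hF, hFle⟩ := abs_fderiv_weighted_le hG hℓ (u := fun z => v z j - v x j)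
    (U := Cv + Cv) hρm hρ0 hρR (by fun_prop)
    (fun y => (abs_sub _ _).trans (add_le_add (hvb y) (hvb x))) hV hM hx
    (w := e d i) (by simp [e])
  obtain ⟨F₁, hF₁, -⟩ := hasFDerivAt_cg hG hℓ hρm hρabs x
  have hpos : 0 < cg G ℓ ρ x := lt_of_lt_of_le (by positivity) hx
  -- Near `x` the averaged density stays positive, so the Favre velocity is the actual quotient.
  have hev : (fun y => favre G ℓ ρ v y j) =ᶠ[nhds x] fun y =>
      v x j + (cg G ℓ ρ y)⁻¹ * cg G ℓ (fun z => ρ z * (v z j - v x j)) y := by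
    filter_upwards [hF₁.continuousAt.eventually (lt_mem_nhds hpos)] with y hy
    exact favre_apply_eq hG hℓ hρm hρabs hvm hv (v x j) j hy
  rw [pd, ((hF.const_add (v x j)).congr_of_eventuallyEq hev).fderiv]
  exact hFle

lemma frobNorm_le_of_abs_le {A : Matrix (Fin d) (Fin d) ℝ} {B : ℝ} (hB0 : 0 ≤ B)
    (hA : ∀ i j, |A i j| ≤ B) : frobNorm A ≤ d * B := by
  refine Real.sqrt_le_iff.2 ⟨by positivity, ?_⟩
  calc ∑ i, ∑ j, A i j ^ 2 ≤ ∑ _i : Fin d, ∑ _j : Fin d, B ^ 2 :=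
        Finset.sum_le_sum fun i _ => Finset.sum_le_sum fun j _ =>
          sq_le_sq' (abs_le.1 (hA i j)).1 (abs_le.1 (hA i j)).2
    _ = (d * B) ^ 2 := by simp; ring

end QT

open QT in
/-- Favre-averaged velocity gradient estimate
`|∇ṽ_ℓ(x)| ≤ (C/ℓ) δv(ℓ;x)[1 + Mδρ(ℓ;x) + M²δρ(ℓ;x)²]`, with `C` depending only on `G, d`. -/
theorem frobNorm_gradMat_favre_le {d : ℕ} (hd : 1 ≤ d)
    (G : Euc d → ℝ) (hG : IsMollifier G) :
    ∃ C > 0, ∀ (ρ : Euc d → ℝ) (v : Euc d → Euc d) (R Cv : ℝ),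
      Measurable ρ → (∀ y, 0 ≤ ρ y) → (∀ y, ρ y ≤ R) →
      Measurable v → (∀ y, ‖v y‖ ≤ Cv) →
      ∀ (x : Euc d) (ℓ M : ℝ), 0 < ℓ → 0 < M → 1 / M ≤ cg G ℓ ρ x →
      frobNorm (gradMat (favre G ℓ ρ v) x) ≤
        C / ℓ * supIncr v ℓ x *
          (1 + M * supIncr ρ ℓ x + M ^ 2 * (supIncr ρ ℓ x) ^ 2) := by
  set K := ∫ r, ‖fderiv ℝ G r‖ with hK
  have hK0 : 0 ≤ K := by positivity
  -- The summand `1` keeps the constant positive.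
  refine ⟨3 * d * K + 1, by positivity, ?_⟩
  intro ρ v R Cv hρm hρ0 hρR hvm hv x ℓ M hℓ hM hx
  have hD := supIncr_nonneg ρ ℓ x
  have hV := supIncr_nonneg v ℓ x
  refine (frobNorm_le_of_abs_le (by positivity) fun i j =>
    abs_pd_favre_le hG hℓ hρm hρ0 hρR hvm hv hM hx i j).trans ?_
  rw [← hK]
  set D := supIncr ρ ℓ x
  set V := supIncr v ℓ x
  calc d * (K / ℓ * V * (1 + 3 * (M * D)))
      ≤ d * (K / ℓ * V * (3 * (1 + M * D + M ^ 2 * D ^ 2))) := by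
        gcongr
        nlinarith [sq_nonneg (M * D)]
    _ = (3 * d * K) / ℓ * V * (1 + M * D + M ^ 2 * D ^ 2) := by ring
    _ ≤ (3 * d * K + 1) / ℓ * V * (1 + M * D + M ^ 2 * D ^ 2) := by
        gcongr
        linarith
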